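/- The nonzero eigenvalues of the 9×9 matrix τ̃ₙ (defined below) are exactly the three roots of λ³ = ((1-θ₁)ⁿλ + θ₁ⁿ)((1-θ₂)ⁿλ + θ₂ⁿ); i.e., the characteristic polynomial of τ̃ₙ equals λ⁶ · (λ³ - (1-θ₁)ⁿ(1-θ₂)ⁿλ² - (θ₁ⁿ(1-θ₂)ⁿ + θ₂ⁿ(1-θ₁)ⁿ)λ - θ₁ⁿθ₂ⁿ). -/

import Mathlib

open Polynomial

/-!
The characteristic polynomial of a product is insensitive to the order of the factors up to a power
of `X` (`Matrix.charpoly_mul_comm_of_le`), so a rank factorization `M = A * B` replaces `M` by the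
smaller matrix `B * A`. With `p = (1-θ₁)ⁿ`, `q = (1-θ₂)ⁿ`, `r = θ₁ⁿ`, `s = θ₂ⁿ`, the proportional
rows and columns of `τ̃ₙ` allow this to be done three times, through sizes 9, 6, 4, 3; several steps
are needed because `0` is not a semisimple eigenvalue. The remaining 3×3 matrix has the stated cubic
as its characteristic polynomial (`charpoly_reduced`).
-/

/-- The 3×3 matrix carrying the nonzero spectrum. -/
lemma charpoly_reduced (p q r s : ℝ) :
    (!![p*q, 1, q; s*p, 0, s; r, 0, 0] : Matrix (Fin 3) (Fin 3) ℝ).charpoly =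
      X ^ 3 - C (p*q) * X ^ 2 - C (r*q + s*p) * X - C (r*s) := by
  simp [Matrix.charpoly, Matrix.det_fin_three, Matrix.charmatrix_apply]
  ring

/-- Columns 1 and 3 agree, which reduces size 4 to size 3. -/
lemma charpoly_four (p q r s : ℝ) :
    (!![p*q, 0, p*q, q; s*p, 0, s*p, s; 0, 1, 0, 0; r, 0, r, 0] :
      Matrix (Fin 4) (Fin 4) ℝ).charpoly =
      X * (!![p*q, 1, q; s*p, 0, s; r, 0, 0] : Matrix (Fin 3) (Fin 3) ℝ).charpoly := by
  let A : Matrix (Fin 4) (Fin 3) ℝ := !![p*q, 0, q; s*p, 0, s; 0, 1, 0; r, 0, 0]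
  let B : Matrix (Fin 3) (Fin 4) ℝ := !![1, 0, 1, 0; 0, 1, 0, 0; 0, 0, 0, 1]
  have hAB : (!![p*q, 0, p*q, q; s*p, 0, s*p, s; 0, 1, 0, 0; r, 0, r, 0] :
      Matrix (Fin 4) (Fin 4) ℝ) = A * B := by
    ext i j
    fin_cases i <;> fin_cases j <;> simp [A, B, Matrix.mul_apply, Fin.sum_univ_succ]
  have hBA : B * A = !![p*q, 1, q; s*p, 0, s; r, 0, 0] := by
    ext i j
    fin_cases i <;> fin_cases j <;> simp [A, B, Matrix.mul_apply, Fin.sum_univ_succ]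
  rw [hAB, Matrix.charpoly_mul_comm_of_le A B (by simp), hBA]
  simp

/-- Rows 3 and 6 are proportional, as are rows 4 and 5, which reduces size 6 to size 4. -/
lemma charpoly_six (p q r s : ℝ) :
    (!![p*q, 0, 0, 0, 1, q; s*p, 0, 0, 1, 0, s; 0, r, 0, 0, 0, 0; r*s, 0, s, 0, 0, 0;
        r*q, 0, q, 0, 0, 0; 0, p, 0, 0, 0, 0] : Matrix (Fin 6) (Fin 6) ℝ).charpoly =
      X ^ 2 * (!![p*q, 0, p*q, q; s*p, 0, s*p, s; 0, 1, 0, 0; r, 0, r, 0] :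
        Matrix (Fin 4) (Fin 4) ℝ).charpoly := by
  let A : Matrix (Fin 6) (Fin 4) ℝ :=
    !![1, 0, 0, 0; 0, 1, 0, 0; 0, 0, r, 0; 0, 0, 0, s; 0, 0, 0, q; 0, 0, p, 0]
  let B : Matrix (Fin 4) (Fin 6) ℝ :=
    !![p*q, 0, 0, 0, 1, q; s*p, 0, 0, 1, 0, s; 0, 1, 0, 0, 0, 0; r, 0, 1, 0, 0, 0]
  have hAB : (!![p*q, 0, 0, 0, 1, q; s*p, 0, 0, 1, 0, s; 0, r, 0, 0, 0, 0; r*s, 0, s, 0, 0, 0;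
        r*q, 0, q, 0, 0, 0; 0, p, 0, 0, 0, 0] : Matrix (Fin 6) (Fin 6) ℝ) = A * B := by
    ext i j
    fin_cases i <;> fin_cases j <;> simp [A, B, Matrix.mul_apply, Fin.sum_univ_succ, mul_comm]
  have hBA : B * A = !![p*q, 0, p*q, q; s*p, 0, s*p, s; 0, 1, 0, 0; r, 0, r, 0] := by
    ext i j
    fin_cases i <;> fin_cases j <;> simp [A, B, Matrix.mul_apply, Fin.sum_univ_succ, mul_comm]
  rw [hAB, Matrix.charpoly_mul_comm_of_le A B (by simp), hBA]
  simp

/-- Columns 2 and 3, 5 and 8, and 6 and 9 agree, which reduces size 9 to size 6. -/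
lemma charpoly_nine (p q r s : ℝ) :
    (!![p*q, 0, 0, 0, 0, 1, q, 0, 1;
        s*p, 0, 0, 0, 0, 0, s, 0, 0;
        0, 0, 0, 0, 1, 0, 0, 1, 0;
        0, r, r, 0, 0, 0, 0, 0, 0;
        0, 0, 0, s, 0, 0, 0, 0, 0;
        0, 0, 0, q, 0, 0, 0, 0, 0;
        0, p, p, 0, 0, 0, 0, 0, 0;
        r*s, 0, 0, 0, 0, 0, 0, 0, 0;
        r*q, 0, 0, 0, 0, 0, 0, 0, 0] : Matrix (Fin 9) (Fin 9) ℝ).charpoly =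
      X ^ 3 * (!![p*q, 0, 0, 0, 1, q; s*p, 0, 0, 1, 0, s; 0, r, 0, 0, 0, 0; r*s, 0, s, 0, 0, 0;
        r*q, 0, q, 0, 0, 0; 0, p, 0, 0, 0, 0] : Matrix (Fin 6) (Fin 6) ℝ).charpoly := by
  let A : Matrix (Fin 9) (Fin 6) ℝ :=
    !![p*q, 0, 0, 0, 1, q;
       s*p, 0, 0, 0, 0, s;
       0, 0, 0, 1, 0, 0;
       0, r, 0, 0, 0, 0;
       0, 0, s, 0, 0, 0;
       0, 0, q, 0, 0, 0;
       0, p, 0, 0, 0, 0;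
       r*s, 0, 0, 0, 0, 0;
       r*q, 0, 0, 0, 0, 0]
  let B : Matrix (Fin 6) (Fin 9) ℝ :=
    !![1, 0, 0, 0, 0, 0, 0, 0, 0;
       0, 1, 1, 0, 0, 0, 0, 0, 0;
       0, 0, 0, 1, 0, 0, 0, 0, 0;
       0, 0, 0, 0, 1, 0, 0, 1, 0;
       0, 0, 0, 0, 0, 1, 0, 0, 1;
       0, 0, 0, 0, 0, 0, 1, 0, 0]
  have hAB : (!![p*q, 0, 0, 0, 0, 1, q, 0, 1;
        s*p, 0, 0, 0, 0, 0, s, 0, 0;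
        0, 0, 0, 0, 1, 0, 0, 1, 0;
        0, r, r, 0, 0, 0, 0, 0, 0;
        0, 0, 0, s, 0, 0, 0, 0, 0;
        0, 0, 0, q, 0, 0, 0, 0, 0;
        0, p, p, 0, 0, 0, 0, 0, 0;
        r*s, 0, 0, 0, 0, 0, 0, 0, 0;
        r*q, 0, 0, 0, 0, 0, 0, 0, 0] : Matrix (Fin 9) (Fin 9) ℝ) = A * B := by
    ext i j
    fin_cases i <;> fin_cases j <;> simp [A, B, Matrix.mul_apply, Fin.sum_univ_succ]
  have hBA : B * A = !![p*q, 0, 0, 0, 1, q; s*p, 0, 0, 1, 0, s; 0, r, 0, 0, 0, 0;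
      r*s, 0, s, 0, 0, 0; r*q, 0, q, 0, 0, 0; 0, p, 0, 0, 0, 0] := by
    ext i j
    fin_cases i <;> fin_cases j <;> simp [A, B, Matrix.mul_apply, Fin.sum_univ_succ]
  rw [hAB, Matrix.charpoly_mul_comm_of_le A B (by simp), hBA]
  simp

/-- The characteristic polynomial of the 9×9 reduced transfer matrix τ̃ₙ equals
X⁶·(X³ - (1-θ₁)ⁿ(1-θ₂)ⁿ X² - (θ₁ⁿ(1-θ₂)ⁿ + θ₂ⁿ(1-θ₁)ⁿ) X - θ₁ⁿθ₂ⁿ), so its nonzero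
eigenvalues are exactly the roots of the Rule-54 cubic. -/
theorem stmt18 (θ₁ θ₂ : ℝ) (hθ₁ : θ₁ ∈ Set.Ioo (0:ℝ) 1) (hθ₂ : θ₂ ∈ Set.Ioo (0:ℝ) 1)
    (n : ℕ) (hn : 1 ≤ n)
    (M : Matrix (Fin 9) (Fin 9) ℝ)
    (hM : M =
      !![(1-θ₁)^n*(1-θ₂)^n, 0, 0, 0, 0, 1, (1-θ₂)^n, 0, 1;
         θ₂^n*(1-θ₁)^n,     0, 0, 0, 0, 0, θ₂^n,     0, 0;
         0, 0, 0, 0, 1, 0, 0, 1, 0;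
         0, θ₁^n, θ₁^n, 0, 0, 0, 0, 0, 0;
         0, 0, 0, θ₂^n, 0, 0, 0, 0, 0;
         0, 0, 0, (1-θ₂)^n, 0, 0, 0, 0, 0;
         0, (1-θ₁)^n, (1-θ₁)^n, 0, 0, 0, 0, 0, 0;
         θ₁^n*θ₂^n, 0, 0, 0, 0, 0, 0, 0, 0;
         θ₁^n*(1-θ₂)^n, 0, 0, 0, 0, 0, 0, 0, 0]) :
    M.charpoly = X ^ 6 *
      (X ^ 3 - C ((1-θ₁)^n*(1-θ₂)^n) * X ^ 2
        - C (θ₁^n*(1-θ₂)^n + θ₂^n*(1-θ₁)^n) * X - C (θ₁^n*θ₂^n)) := by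
  rw [hM, charpoly_nine, charpoly_six, charpoly_four, charpoly_reduced]
  ring
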